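/- Let T_s be a spanning tree of the connected graph G with incidence matrices B_s ∈ ℝ^{n×(n−1)} (for T_s) and B ∈ ℝ^{n×m} (for G). Then B_s B_s† B = B, and consequently, defining B_s^# = (B_s† B)ᵀ ∈ ℝ^{m×(n−1)}, we have B_s^# B_sᵀ = Bᵀ. -/

import Mathlib

/-!
If `X` is a generalized inverse of `A`, that is `A * X * A = A`, then each row of `1 - A * X` lies
in the left kernel of `A`. For the incidence matrix of a connected graph this kernel consists of
the constant vectors, and these are killed by every matrix with zero column sums, so
`(1 - A * X) * B = 0`.
-/

open Matrix

section

variable {V E F R : Type*}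

/-- `B` is the oriented incidence matrix of a multigraph with vertex set `V` and edge set `E`: the
column of an edge has the entry `1` at one endpoint, `-1` at the other and `0` elsewhere. No graph
is carried along, since the columns of `B` determine it; loops are excluded. -/
def IsOrientedIncidence [Zero R] [One R] [Neg R] (B : Matrix V E R) : Prop :=
  ∀ e, ∃ i j, i ≠ j ∧ B i e = 1 ∧ B j e = -1 ∧ ∀ k, k ≠ i → k ≠ j → B k e = 0

variable [Fintype V]

theorem IsOrientedIncidence.one_vecMul_eq_zero [NonAssocRing R] {B : Matrix V E R}
    (hB : IsOrientedIncidence B) : 1 ᵥ* B = 0 := by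
  ext e
  obtain ⟨i, j, hij, hi, hj, h0⟩ := hB e
  calc (1 ᵥ* B) e = ∑ k, B k e := one_dotProduct fun k => B k e
    _ = B i e + B j e := Fintype.sum_eq_add i j hij fun k hk => h0 k hk.1 hk.2
    _ = 0 := by rw [hi, hj, add_neg_cancel]

theorem mul_eq_self_of_vecMul_eq_zero_imp [NonAssocRing R]
    {A : Matrix V F R} {B : Matrix V E R} {P : Matrix V V R} (hP : P * A = A)
    (hAB : ∀ v, v ᵥ* A = 0 → v ᵥ* B = 0) : P * B = B := by
  classical
  have hA : (1 - P) * A = 0 := by rw [Matrix.sub_mul, Matrix.one_mul, hP, sub_self]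
  have hB : (1 - P) * B = 0 := by
    funext i
    exact hAB ((1 - P) i) (congrFun hA i)
  rw [Matrix.sub_mul, Matrix.one_mul, sub_eq_zero] at hB
  exact hB.symm

theorem spanning_tree_incidence_identities_general [Fintype F] [CommRing R]
    {A : Matrix V F R} {B : Matrix V E R} {X : Matrix F V R} (hB : 1 ᵥ* B = 0)
    (hA : ∀ v, Aᵀ *ᵥ v = 0 → ∃ c, ∀ i, v i = c) (hX : A * X * A = A) :
    A * X * B = B ∧ (X * B)ᵀ * Aᵀ = Bᵀ := by
  have hAB : ∀ v, v ᵥ* A = 0 → v ᵥ* B = 0 := by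
    intro v hv
    obtain ⟨c, hc⟩ := hA v (by rwa [mulVec_transpose])
    have hv_const : v = c • 1 := by
      ext i
      simp [hc]
    rw [hv_const, smul_vecMul, hB, smul_zero]
  have hAXB : A * X * B = B := mul_eq_self_of_vecMul_eq_zero_imp hX hAB
  exact ⟨hAXB, by rw [← transpose_mul, ← Matrix.mul_assoc, hAXB]⟩

end

theorem spanning_tree_incidence_identities
    (n m : ℕ) (hn : 2 ≤ n)
    (B : Matrix (Fin n) (Fin m) ℝ)
    (Bs : Matrix (Fin n) (Fin (n - 1)) ℝ)
    -- B is the oriented incidence matrix of the connected graph G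
    (hB : ∀ e : Fin m, ∃ i j : Fin n, i ≠ j ∧ B i e = 1 ∧ B j e = -1 ∧
      ∀ k, k ≠ i → k ≠ j → B k e = 0)
    (hconn : ∀ v : Fin n → ℝ, B.transpose.mulVec v = 0 → ∃ c, ∀ i, v i = c)
    -- Bs is the oriented incidence matrix of a spanning tree T_s of G
    (hBs : ∀ e : Fin (n - 1), ∃ i j : Fin n, i ≠ j ∧ Bs i e = 1 ∧ Bs j e = -1 ∧
      ∀ k, k ≠ i → k ≠ j → Bs k e = 0)
    (htree : ∀ v : Fin n → ℝ, Bs.transpose.mulVec v = 0 → ∃ c, ∀ i, v i = c)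
    -- every edge of T_s is an edge of G
    (hsub : ∀ e : Fin (n - 1), ∃ f : Fin m, ∀ i, Bs i e = B i f)
    -- Bs† : the Moore–Penrose pseudoinverse of Bs
    (Bsdag : Matrix (Fin (n - 1)) (Fin n) ℝ)
    (h1 : Bs * Bsdag * Bs = Bs) (h2 : Bsdag * Bs * Bsdag = Bsdag)
    (h3 : (Bs * Bsdag).transpose = Bs * Bsdag) (h4 : (Bsdag * Bs).transpose = Bsdag * Bs) :
    Bs * Bsdag * B = B ∧ (Bsdag * B).transpose * Bs.transpose = B.transpose :=
  spanning_tree_incidence_identities_general (IsOrientedIncidence.one_vecMul_eq_zero hB) htree h1
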